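/- Let ρ : U → ℂ^× be a group homomorphism. There exists a holomorphic function f : D → ℂ, not identically zero, satisfying f((a,b)·z) = ρ(a)·f(z) for all (a,b) ∈ Γ(K,U) and all z ∈ D, if and only if ρ is the trivial homomorphism. -/

import Mathlib

/-!
A section is in particular an `𝒪_K`-periodic holomorphic function `f` on `D`, and every such
function is constant, so a nonzero section forces `ρ = 1`; conversely constants are sections
of the trivial bundle. Constancy is proved as follows.

* `𝒪_K` is cobounded in `ℝˢ × ℂᵗ` (`exists_integer_near`). Hence on the set of points of `D`
  whose first `s` coordinates are fixed, `f` is bounded, and Liouville's theorem shows that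
  `f` depends only on the first `s` coordinates (`eq_of_real_coords_eq`).
* Since `ℓ(U)` spans `ℝˢ`, the group `U` contains units that are small at all real places
  (`exists_small_unit`); multiplying by such a unit turns coboundedness of `𝒪_K` in `ℝˢ` into
  density (`exists_integer_close`). Hence `f` is invariant under translation by
  `ℝˢ × ℂᵗ` (`apply_add_eq`).
* The complex-linear differential of `f` therefore vanishes on `ℝ^{s+t}`, so it is zero, and `D`
  is connected (`periodic_const`).
-/

open NumberField

noncomputable section

variable (K : Type) [Field K] [NumberField K] (U : Subgroup (𝓞 K)ˣ)
variable (s t : ℕ) (σ : Fin (s + 2 * t) → (K →+* ℂ))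

/-- The logarithm map `ℓ : U → ℝˢ`, `ℓ(u) = (log σ₁(u), …, log σ_s(u))`. -/
def ell : ↥U → (Fin s → ℝ) := fun u i =>
  Real.log ((σ (Fin.castLE (by omega) i) (algebraMap (𝓞 K) K ((u : (𝓞 K)ˣ) : 𝓞 K))).re)

/-- The value `σ_i(u)` of the `i`-th embedding at a unit `u ∈ U`. -/
def embVal (u : ↥U) (i : Fin (s + 2 * t)) : ℂ :=
  σ i (algebraMap (𝓞 K) K ((u : (𝓞 K)ˣ) : 𝓞 K))

/-- The universal cover `D = Hˢ × ℂᵗ ⊆ ℂ^{s+t}` of the Oeljeklaus–Toma manifold. -/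
def OTdomain : Set (Fin (s + t) → ℂ) := {z | ∀ i : Fin (s + t), (i : ℕ) < s → 0 < (z i).im}

/-- The affine action of `(a, b) ∈ Γ(K,U) = U ⋉ 𝒪_K` on `D`:
`(a,b)·z = (σ₁(a)z₁+σ₁(b), …, σ_{s+t}(a)z_{s+t}+σ_{s+t}(b))`. -/
def OTact (a : (𝓞 K)ˣ) (b : 𝓞 K) (z : Fin (s + t) → ℂ) : Fin (s + t) → ℂ := fun i =>
  σ (Fin.castLE (by omega) i) (algebraMap (𝓞 K) K (a : 𝓞 K)) * z i +
    σ (Fin.castLE (by omega) i) (algebraMap (𝓞 K) K b)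

/-! ### Approximation by algebraic integers -/

/-- The projection of `𝒪_K` to `ℝˢ × ℂᵗ` is cobounded: every vector with real first `s`
coordinates lies within a uniform distance of some `(σ₁(b), …, σ_{s+t}(b))`. An integral basis
is a `ℂ`-basis of `ℂ^{Hom(K, ℂ)}`, taking real parts of the coordinates makes them real, and
rounding these down costs a bounded error. -/
lemma exists_integer_near (hσinj : Function.Injective σ)
    (hreal : ∀ i : Fin (s + 2 * t), (i : ℕ) < s → ∀ x : K, (σ i x).im = 0)
    (hconj : ∀ k : ℕ, ∀ hk : k < t, ∀ x : K,
      σ ⟨s + t + k, by omega⟩ x = (starRingEnd ℂ) (σ ⟨s + k, by omega⟩ x)) :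
    ∃ C : ℝ, 0 ≤ C ∧ ∀ v : Fin (s + t) → ℂ, (∀ i : Fin (s + t), (i : ℕ) < s → (v i).im = 0) →
      ∃ b : 𝓞 K, ∀ i : Fin (s + t),
        ‖v i - σ (Fin.castLE (by omega) i) (algebraMap (𝓞 K) K b)‖ ≤ C := by
  set B := canonicalEmbedding.latticeBasis K
  let ω := RingOfIntegers.basis K
  have hB : ∀ i j, B j (σ i) = σ i (algebraMap (𝓞 K) K (ω j)) := fun i j => by
    rw [canonicalEmbedding.latticeBasis_apply, integralBasis_apply]; rfl
  refine ⟨∑ i, ∑ j, ‖σ i (algebraMap (𝓞 K) K (ω j))‖, by positivity, fun v hv => ?_⟩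
  -- The factor `2` and the value `0` at the conjugate places compensate for taking real parts.
  let v' : Fin (s + 2 * t) → ℂ := fun i =>
    if h : (i : ℕ) < s + t then (if (i : ℕ) < s then v ⟨i, h⟩ else 2 * v ⟨i, h⟩) else 0
  let V : (K →+* ℂ) → ℂ := Function.extend σ v' 0
  let c := B.repr V
  have hc : ∀ i, ∑ j, c j * σ i (algebraMap (𝓞 K) K (ω j)) = v' i := fun i => by
    have h := congrFun (B.sum_repr V) (σ i)
    rw [Finset.sum_apply] at h
    simpa [V, hσinj.extend_apply, hB, c] using h
  have hcj : ∀ i, ∑ j, (starRingEnd ℂ) (c j) *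
      (starRingEnd ℂ) (σ i (algebraMap (𝓞 K) K (ω j))) = (starRingEnd ℂ) (v' i) := fun i => by
    rw [← hc i, map_sum]; simp
  have hre : ∀ i : Fin (s + t), ∑ j, ((c j).re : ℂ) *
      σ (Fin.castLE (by omega) i) (algebraMap (𝓞 K) K (ω j)) = v i := fun i => by
    have h1 := hc (Fin.castLE (by omega) i)
    have h2 : ∑ j, (starRingEnd ℂ) (c j) *
        σ (Fin.castLE (by omega) i) (algebraMap (𝓞 K) K (ω j)) =
        2 * v i - v' (Fin.castLE (by omega) i) := by
      by_cases hi : (i : ℕ) < s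
      · have h := hcj (Fin.castLE (by omega) i)
        have hr : ∀ x, (starRingEnd ℂ) (σ (Fin.castLE (by omega) i) x) =
            σ (Fin.castLE (by omega) i) x :=
          fun x => Complex.conj_eq_iff_im.2 (hreal _ hi x)
        simp only [hr] at h
        rw [h]
        have : v' (Fin.castLE (by omega) i) = v i := by simp [v', hi]
        rw [this, Complex.conj_eq_iff_im.2 (hv i hi)]
        ring
      · obtain ⟨k, hk⟩ : ∃ k, (i : ℕ) = s + k := ⟨i - s, by omega⟩
        have hkt : k < t := by have := i.2; omega
        have h := hcj ⟨s + t + k, by omega⟩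
        have hik : (Fin.castLE (by omega) i : Fin (s + 2 * t)) = ⟨s + k, by omega⟩ :=
          Fin.ext hk
        simp only [hconj k hkt, Complex.conj_conj] at h
        rw [hik, h]
        have e1 : v' ⟨s + t + k, by omega⟩ = 0 := by simp [v']
        have e2 : v' ⟨s + k, by omega⟩ = 2 * v i := by
          rw [← hik]; simp [v', hi]
        rw [e1, e2]; simp
    have h3 : ∀ z : ℂ, (z.re : ℂ) = (z + (starRingEnd ℂ) z) / 2 := fun z => by
      rw [Complex.add_conj]; push_cast; ring
    calc _ = (∑ j, c j * σ (Fin.castLE (by omega) i) (algebraMap (𝓞 K) K (ω j)) +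
          ∑ j, (starRingEnd ℂ) (c j) *
            σ (Fin.castLE (by omega) i) (algebraMap (𝓞 K) K (ω j))) / 2 := by
          rw [← Finset.sum_add_distrib, Finset.sum_div]
          refine Finset.sum_congr rfl fun j _ => ?_
          rw [h3]; ring
      _ = v i := by rw [h1, h2]; ring
  refine ⟨∑ j, ⌊(c j).re⌋ • ω j, fun i => ?_⟩
  have : v i - σ (Fin.castLE (by omega) i)
      (algebraMap (𝓞 K) K (∑ j, ⌊(c j).re⌋ • ω j)) =
      ∑ j, ((Int.fract (c j).re : ℝ) : ℂ) *
        σ (Fin.castLE (by omega) i) (algebraMap (𝓞 K) K (ω j)) := by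
    rw [← hre i]
    simp only [map_sum, zsmul_eq_mul, map_mul, map_intCast]
    rw [← Finset.sum_sub_distrib]
    refine Finset.sum_congr rfl fun j _ => ?_
    rw [← Int.self_sub_floor]; push_cast; ring
  rw [this]
  refine (norm_sum_le _ _).trans (le_trans (Finset.sum_le_sum fun j _ => ?_)
    (Finset.single_le_sum
      (f := fun i => ∑ j, ‖σ i (algebraMap (𝓞 K) K (ω j))‖)
      (fun i _ => by positivity) (Finset.mem_univ (Fin.castLE (by omega) i))))
  rw [norm_mul, Complex.norm_real, Real.norm_of_nonneg (Int.fract_nonneg _)]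
  exact mul_le_of_le_one_left (norm_nonneg _) (Int.fract_lt_one _).le

/-- `ℓ` as a homomorphism from `U`, written additively. -/
def ellHom (hreal : ∀ i : Fin (s + 2 * t), (i : ℕ) < s → ∀ x : K, (σ i x).im = 0)
    (hUpos : ∀ u ∈ U, ∀ i : Fin (s + 2 * t), (i : ℕ) < s →
      0 < (σ i (algebraMap (𝓞 K) K (u : (𝓞 K)ˣ))).re) :
    Additive ↥U →+ (Fin s → ℝ) where
  toFun u := ell K U s t σ u.toMul
  map_zero' := by ext i; simp [ell]
  map_add' u v := by
    ext i
    have hi : ((Fin.castLE (by omega) i : Fin (s + 2 * t)) : ℕ) < s := i.2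
    simp only [ell, toMul_add, Subgroup.coe_mul, Units.val_mul, map_mul, Complex.mul_re,
      hreal _ hi, mul_zero, sub_zero, Pi.add_apply]
    exact Real.log_mul (hUpos _ u.toMul.2 _ hi).ne' (hUpos _ v.toMul.2 _ hi).ne'

/-- Since `ℓ(U)` spans `ℝˢ`, some unit in `U` is simultaneously small at all real places:
approximate `(-N, …, -N)` for large `N` by rounding coefficients. -/
lemma exists_small_unit
    (hreal : ∀ i : Fin (s + 2 * t), (i : ℕ) < s → ∀ x : K, (σ i x).im = 0)
    (hUpos : ∀ u ∈ U, ∀ i : Fin (s + 2 * t), (i : ℕ) < s →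
      0 < (σ i (algebraMap (𝓞 K) K (u : (𝓞 K)ˣ))).re)
    (hspan : Submodule.span ℝ (Set.range (ell K U s t σ)) = ⊤) {ε : ℝ} (hε : 0 < ε) :
    ∃ u : (𝓞 K)ˣ, ∀ i : Fin (s + 2 * t), (i : ℕ) < s →
      ‖σ i (algebraMap (𝓞 K) K u)‖ ≤ ε := by
  have hmem : (fun _ => -1 : Fin s → ℝ) ∈ Submodule.span ℝ (Set.range (ell K U s t σ)) := by
    rw [hspan]; trivial
  obtain ⟨c, hc⟩ := Finsupp.mem_span_range_iff_exists_finsupp.1 hmem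
  let S : ℝ := ∑ u ∈ c.support, ‖ell K U s t σ u‖
  obtain ⟨N, hN⟩ := exists_nat_ge (S - Real.log ε)
  let L := ellHom K U s t σ hreal hUpos
  let w : Additive ↥U := ∑ u ∈ c.support, ⌊(N : ℝ) * c u⌋ • Additive.ofMul u
  have hLw : ∀ i : Fin s, L w i ≤ Real.log ε := fun i => by
    have h1 : L w i = ∑ u ∈ c.support, (⌊(N : ℝ) * c u⌋ : ℝ) * ell K U s t σ u i := by
      simp only [w, map_sum, map_zsmul, Finset.sum_apply, zsmul_eq_mul]
      rfl
    have h2 : ∑ u ∈ c.support, c u * ell K U s t σ u i = -1 := by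
      have := congrFun hc i
      rw [Finsupp.sum, Finset.sum_apply] at this
      simpa using this
    have h3 : L w i = -N - ∑ u ∈ c.support,
        Int.fract ((N : ℝ) * c u) * ell K U s t σ u i := by
      have h4 : (-N : ℝ) = ∑ u ∈ c.support, (N * c u) * ell K U s t σ u i := by
        simp only [mul_assoc]
        rw [← Finset.mul_sum, h2]; ring
      rw [h1, h4, ← Finset.sum_sub_distrib]
      refine Finset.sum_congr rfl fun u _ => ?_
      rw [← Int.self_sub_floor]; ring
    have h5 : -∑ u ∈ c.support, Int.fract ((N : ℝ) * c u) * ell K U s t σ u i ≤ S := by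
      rw [← Finset.sum_neg_distrib]
      refine Finset.sum_le_sum fun u _ => ?_
      refine (neg_le_abs _).trans ?_
      rw [abs_mul, abs_of_nonneg (Int.fract_nonneg _)]
      exact (mul_le_of_le_one_left (abs_nonneg _) (Int.fract_lt_one _).le).trans
        (norm_le_pi_norm (ell K U s t σ u) i)
    linarith
  refine ⟨(w.toMul : ↥U), fun i hi => ?_⟩
  have hpos := hUpos _ w.toMul.2 i hi
  have h : Real.log ((σ i (algebraMap (𝓞 K) K ((w.toMul : (𝓞 K)ˣ) : 𝓞 K))).re) ≤ Real.log ε :=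
    hLw ⟨i, hi⟩
  rw [Real.log_le_log_iff hpos hε] at h
  rwa [← Complex.re_add_im (σ i _), hreal i hi, Complex.ofReal_zero, zero_mul, add_zero,
    Complex.norm_real, Real.norm_of_nonneg hpos.le]

/-- The image of `𝒪_K` in `ℝˢ` is dense: divide the target by a unit `u` that is small at
the real places, approximate up to a bounded error, and multiply by `u` again. -/
lemma exists_integer_close (hσinj : Function.Injective σ)
    (hreal : ∀ i : Fin (s + 2 * t), (i : ℕ) < s → ∀ x : K, (σ i x).im = 0)
    (hconj : ∀ k : ℕ, ∀ hk : k < t, ∀ x : K,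
      σ ⟨s + t + k, by omega⟩ x = (starRingEnd ℂ) (σ ⟨s + k, by omega⟩ x))
    (hUpos : ∀ u ∈ U, ∀ i : Fin (s + 2 * t), (i : ℕ) < s →
      0 < (σ i (algebraMap (𝓞 K) K (u : (𝓞 K)ˣ))).re)
    (hspan : Submodule.span ℝ (Set.range (ell K U s t σ)) = ⊤)
    (r : Fin (s + t) → ℂ) (hr : ∀ i : Fin (s + t), (i : ℕ) < s → (r i).im = 0) {ε : ℝ} (hε : 0 < ε) :
    ∃ b : 𝓞 K, ∀ i : Fin (s + t), (i : ℕ) < s →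
      ‖r i - σ (Fin.castLE (by omega) i) (algebraMap (𝓞 K) K b)‖ ≤ ε := by
  obtain ⟨C, hC, hnear⟩ := exists_integer_near K s t σ hσinj hreal hconj
  obtain ⟨u, hu⟩ := exists_small_unit K U s t σ hreal hUpos hspan
    (show 0 < ε / (C + 1) by positivity)
  let τ : Fin (s + t) → ℂ := fun i => σ (Fin.castLE (by omega) i) (algebraMap (𝓞 K) K u)
  have hτ : ∀ i, τ i ≠ 0 := fun i => by simp [τ]
  obtain ⟨b, hb⟩ := hnear (fun i => r i / τ i) fun i hi => by
    have h1 := Complex.conj_eq_iff_im.2 (hr i hi)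
    have h2 := Complex.conj_eq_iff_im.2
      (hreal (Fin.castLE (by omega) i) hi (algebraMap (𝓞 K) K u))
    refine Complex.conj_eq_iff_im.1 ?_
    rw [map_div₀, h1, h2]
  refine ⟨u * b, fun i hi => ?_⟩
  have h : r i - σ (Fin.castLE (by omega) i) (algebraMap (𝓞 K) K (u * b)) =
      τ i * (r i / τ i - σ (Fin.castLE (by omega) i) (algebraMap (𝓞 K) K b)) := by
    rw [map_mul, map_mul, mul_sub, mul_div_cancel₀ _ (hτ i)]
  rw [h, norm_mul]
  calc _ ≤ ε / (C + 1) * C :=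
        mul_le_mul (hu (Fin.castLE (by omega) i) hi) (hb i) (norm_nonneg _) (by positivity)
    _ ≤ ε := by
        rw [div_mul_eq_mul_div, div_le_iff₀ (by positivity)]
        nlinarith

/-! ### Periodic holomorphic functions on `D` -/

lemma isOpen_OTdomain : IsOpen (OTdomain s t) := by
  have : OTdomain s t = ⋂ i : Fin (s + t), {z | (i : ℕ) < s → 0 < (z i).im} := by
    ext z; simp [OTdomain]
  rw [this]
  refine isOpen_iInter_of_finite fun i => ?_
  by_cases hi : (i : ℕ) < s
  · simp only [hi, true_imp_iff]
    exact isOpen_lt continuous_const (Complex.continuous_im.comp (continuous_apply i))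
  · simp [hi]

lemma convex_OTdomain : Convex ℝ (OTdomain s t) := by
  intro x hx y hy a b ha hb hab i hi
  have h := (convex_Ioi (0 : ℝ)) (hx i hi) (hy i hi) ha hb hab
  simpa using h

variable {s t}

lemma add_mem_OTdomain {z r : Fin (s + t) → ℂ} (hz : z ∈ OTdomain s t)
    (hr : ∀ i : Fin (s + t), (i : ℕ) < s → (r i).im = 0) : z + r ∈ OTdomain s t := fun i hi => by
  simpa [hr i hi] using hz i hi

/-- Liouville step: an `𝒪_K`-periodic holomorphic function on `D` does not depend on the last
`t` coordinates, because over fixed first coordinates translations move everything into a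
compact subset of `D`. -/
lemma eq_of_real_coords_eq (hσinj : Function.Injective σ)
    (hreal : ∀ i : Fin (s + 2 * t), (i : ℕ) < s → ∀ x : K, (σ i x).im = 0)
    (hconj : ∀ k : ℕ, ∀ hk : k < t, ∀ x : K,
      σ ⟨s + t + k, by omega⟩ x = (starRingEnd ℂ) (σ ⟨s + k, by omega⟩ x))
    {f : (Fin (s + t) → ℂ) → ℂ} (hf : DifferentiableOn ℂ f (OTdomain s t))
    (hper : ∀ b : 𝓞 K, ∀ z ∈ OTdomain s t,
      f (z + fun i => σ (Fin.castLE (by omega) i) (algebraMap (𝓞 K) K b)) = f z)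
    {z z' : Fin (s + t) → ℂ} (hz : z ∈ OTdomain s t)
    (hzz : ∀ i : Fin (s + t), (i : ℕ) < s → z' i = z i) : f z' = f z := by
  obtain ⟨C, hC, hnear⟩ := exists_integer_near K s t σ hσinj hreal hconj
  let Q : Set (Fin (s + t) → ℂ) :=
    Metric.closedBall (fun i : Fin (s + t) => if (i : ℕ) < s then ((z i).im : ℂ) * Complex.I else 0) C ∩
      {q | ∀ i : Fin (s + t), (i : ℕ) < s → (q i).im = (z i).im}
  have hQ : IsCompact Q := by
    refine (isCompact_closedBall _ _).inter_right ?_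
    simp only [Set.ofPred_forall]
    exact isClosed_iInter fun i => isClosed_iInter fun _ =>
      isClosed_eq (Complex.continuous_im.comp (continuous_apply i)) continuous_const
  have hQD : Q ⊆ OTdomain s t := fun q hq i hi => by rw [hq.2 i hi]; exact hz i hi
  have hline : ∀ μ : ℂ, ∀ i : Fin (s + t), (i : ℕ) < s → (z + μ • (z' - z)) i = z i := fun μ i hi => by
    simp [hzz i hi]
  have hmem : ∀ μ : ℂ, z + μ • (z' - z) ∈ OTdomain s t := fun μ i hi => by
    rw [hline μ i hi]; exact hz i hi
  have hdiff : Differentiable ℂ fun μ : ℂ => f (z + μ • (z' - z)) := fun μ =>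
    DifferentiableAt.comp μ (hf.differentiableAt ((isOpen_OTdomain s t).mem_nhds (hmem μ)))
      (by fun_prop)
  have hbdd : Bornology.IsBounded (Set.range fun μ : ℂ => f (z + μ • (z' - z))) := by
    refine (hQ.image_of_continuousOn (hf.continuousOn.mono hQD)).isBounded.subset ?_
    rintro _ ⟨μ, rfl⟩
    set p := z + μ • (z' - z) with hp
    obtain ⟨b, hb⟩ := hnear (fun i : Fin (s + t) => if (i : ℕ) < s then ((p i).re : ℂ) else p i)
      (fun i hi => by simp [hi])
    refine ⟨p + fun i => σ (Fin.castLE (by omega) i) (algebraMap (𝓞 K) K (-b)), ⟨?_, ?_⟩,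
      hper _ _ (hmem μ)⟩
    · rw [Metric.mem_closedBall, dist_pi_le_iff hC]
      intro i
      rw [dist_eq_norm]
      refine (congrArg norm ?_).trans_le (hb i)
      by_cases hi : (i : ℕ) < s
      · have h1 := Complex.re_add_im (p i)
        have h2 : (z i).im = (p i).im := by rw [hp, hline μ i hi]
        simp only [hi, if_true, Pi.add_apply, map_neg, h2]
        linear_combination -h1
      · simp only [hi, if_false, Pi.add_apply, map_neg]
        ring
    · intro i hi
      rw [Pi.add_apply, Complex.add_im, hreal _ hi, hp, hline μ i hi, add_zero]
  simpa using hdiff.apply_eq_apply_of_bounded hbdd 1 0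

/-- By density of `𝒪_K` in `ℝˢ` and continuity, an `𝒪_K`-periodic holomorphic function on `D`
is invariant under all translations by `ℝˢ × ℂᵗ`. -/
lemma apply_add_eq (hσinj : Function.Injective σ)
    (hreal : ∀ i : Fin (s + 2 * t), (i : ℕ) < s → ∀ x : K, (σ i x).im = 0)
    (hconj : ∀ k : ℕ, ∀ hk : k < t, ∀ x : K,
      σ ⟨s + t + k, by omega⟩ x = (starRingEnd ℂ) (σ ⟨s + k, by omega⟩ x))
    (hUpos : ∀ u ∈ U, ∀ i : Fin (s + 2 * t), (i : ℕ) < s →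
      0 < (σ i (algebraMap (𝓞 K) K (u : (𝓞 K)ˣ))).re)
    (hspan : Submodule.span ℝ (Set.range (ell K U s t σ)) = ⊤)
    {f : (Fin (s + t) → ℂ) → ℂ} (hf : DifferentiableOn ℂ f (OTdomain s t))
    (hper : ∀ b : 𝓞 K, ∀ z ∈ OTdomain s t,
      f (z + fun i => σ (Fin.castLE (by omega) i) (algebraMap (𝓞 K) K b)) = f z)
    {z r : Fin (s + t) → ℂ} (hz : z ∈ OTdomain s t)
    (hr : ∀ i : Fin (s + t), (i : ℕ) < s → (r i).im = 0) : f (z + r) = f z := by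
  have hzr := add_mem_OTdomain hz hr
  have hcont : ContinuousAt f (z + r) :=
    (hf.differentiableAt ((isOpen_OTdomain s t).mem_nhds hzr)).continuousAt
  refine eq_of_forall_dist_le fun ε hε => ?_
  obtain ⟨δ, hδ, hball⟩ := Metric.continuousAt_iff.1 hcont ε hε
  obtain ⟨b, hb⟩ := exists_integer_close K U s t σ hσinj hreal hconj hUpos hspan r hr
    (half_pos hδ)
  -- `q` has the first coordinates of `z + σ(b)` and the last coordinates of `z + r`.
  let q : Fin (s + t) → ℂ := z + fun i : Fin (s + t) =>
    if (i : ℕ) < s then σ (Fin.castLE (by omega) i) (algebraMap (𝓞 K) K b) else r i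
  have hq : f q = f z := by
    rw [← hper b z hz]
    refine eq_of_real_coords_eq K σ hσinj hreal hconj hf hper
      (add_mem_OTdomain hz fun i hi => hreal _ hi _) fun i hi => ?_
    simp [q, hi]
  have hdist : dist q (z + r) < δ := by
    refine lt_of_le_of_lt ((dist_pi_le_iff (half_pos hδ).le).2 fun i => ?_) (half_lt_self hδ)
    by_cases hi : (i : ℕ) < s
    · rw [dist_comm, dist_eq_norm]
      simpa [q, hi] using hb i hi
    · simpa [q, hi] using (half_pos hδ).le
  have h := (hball hdist).le
  rwa [hq, dist_comm] at h

/-- An `𝒪_K`-periodic holomorphic function on `D` is constant: its differential vanishes on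
real vectors, hence on all vectors by complex linearity. -/
lemma periodic_const (hσinj : Function.Injective σ)
    (hreal : ∀ i : Fin (s + 2 * t), (i : ℕ) < s → ∀ x : K, (σ i x).im = 0)
    (hconj : ∀ k : ℕ, ∀ hk : k < t, ∀ x : K,
      σ ⟨s + t + k, by omega⟩ x = (starRingEnd ℂ) (σ ⟨s + k, by omega⟩ x))
    (hUpos : ∀ u ∈ U, ∀ i : Fin (s + 2 * t), (i : ℕ) < s →
      0 < (σ i (algebraMap (𝓞 K) K (u : (𝓞 K)ˣ))).re)
    (hspan : Submodule.span ℝ (Set.range (ell K U s t σ)) = ⊤)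
    {f : (Fin (s + t) → ℂ) → ℂ} (hf : DifferentiableOn ℂ f (OTdomain s t))
    (hper : ∀ b : 𝓞 K, ∀ z ∈ OTdomain s t,
      f (z + fun i => σ (Fin.castLE (by omega) i) (algebraMap (𝓞 K) K b)) = f z)
    {z z' : Fin (s + t) → ℂ} (hz : z ∈ OTdomain s t) (hz' : z' ∈ OTdomain s t) :
    f z = f z' := by
  refine (isOpen_OTdomain s t).is_const_of_fderiv_eq_zero
    (convex_OTdomain s t).isPreconnected hf (fun w hw => ?_) hz hz'
  have hfd := (hf.differentiableAt ((isOpen_OTdomain s t).mem_nhds hw)).hasFDerivAt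
  have hreal_dir : ∀ d : Fin (s + t) → ℝ, fderiv ℂ f w (fun i => (d i : ℂ)) = 0 := fun d => by
    have h1 := (hfd.restrictScalars ℝ).hasLineDerivAt (fun i => (d i : ℂ))
    refine HasDerivAt.unique h1 ?_
    have h2 : (fun x : ℝ => f (w + x • fun i => (d i : ℂ))) = fun _ => f w := by
      funext x
      exact apply_add_eq K U σ hσinj hreal hconj hUpos hspan hf hper hw fun i _ => by simp
    rw [h2]
    exact hasDerivAt_const _ _
  ext1 e
  have he : e = (fun i => ((e i).re : ℂ)) + Complex.I • (fun i => ((e i).im : ℂ)) := by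
    funext i
    simp [mul_comm Complex.I]
  rw [he, map_add, map_smul, hreal_dir fun i => (e i).re, hreal_dir fun i => (e i).im]
  simp

variable (s t)

/-! ### Sections of flat line bundles -/

/--
**Corollary 1.4.** The flat line bundle `E_ρ` over the Oeljeklaus–Toma manifold `X(K,U)`
admits a nonzero holomorphic section (formalized as a `ρ`-equivariant holomorphic function on
the universal cover `D`, not identically zero) if and only if `ρ` is trivial. -/
theorem OT_holomorphic_section_iff_trivial
    (hs : 0 < s) (ht : 0 < t)
    (hdeg : Module.finrank ℚ K = s + 2 * t)
    (hσinj : Function.Injective σ)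
    (hreal : ∀ i : Fin (s + 2 * t), (i : ℕ) < s → ∀ x : K, (σ i x).im = 0)
    (hnonreal : ∀ i : Fin (s + 2 * t), s ≤ (i : ℕ) → ∃ x : K, (σ i x).im ≠ 0)
    (hconj : ∀ k : ℕ, ∀ hk : k < t, ∀ x : K,
      σ ⟨s + t + k, by omega⟩ x = (starRingEnd ℂ) (σ ⟨s + k, by omega⟩ x))
    (hUpos : ∀ u ∈ U, ∀ i : Fin (s + 2 * t), (i : ℕ) < s →
      0 < (σ i (algebraMap (𝓞 K) K (u : (𝓞 K)ˣ))).re)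
    (hellinj : Function.Injective (ell K U s t σ))
    (hdisc : DiscreteTopology (AddSubgroup.closure (Set.range (ell K U s t σ))))
    (hspan : Submodule.span ℝ (Set.range (ell K U s t σ)) = ⊤)
    (ρ : ↥U →* ℂˣ) :
    (∃ f : (Fin (s + t) → ℂ) → ℂ, DifferentiableOn ℂ f (OTdomain s t) ∧
      (∃ z ∈ OTdomain s t, f z ≠ 0) ∧
      ∀ (a : ↥U) (b : 𝓞 K), ∀ z ∈ OTdomain s t,
        f (OTact K s t σ (a : (𝓞 K)ˣ) b z) = (ρ a : ℂ) * f z) ↔ ρ = 1 := by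
  constructor
  · rintro ⟨f, hf, ⟨z, hz, hfz⟩, hequiv⟩
    have hper : ∀ b : 𝓞 K, ∀ z ∈ OTdomain s t,
        f (z + fun i => σ (Fin.castLE (by omega) i) (algebraMap (𝓞 K) K b)) = f z :=
      fun b z hz => by
        have h := hequiv 1 b z hz
        rw [map_one, Units.val_one, one_mul] at h
        rw [← h]
        congr 1
        funext i
        simp [OTact]
    ext a
    have hmem : OTact K s t σ (a : (𝓞 K)ˣ) 0 z ∈ OTdomain s t := fun i hi => by
      have hpos := hUpos a a.2 (Fin.castLE (by omega) i) hi
      simp only [OTact, map_zero, add_zero, Complex.mul_im, hreal (Fin.castLE _ i) hi, zero_mul]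
      exact mul_pos hpos (hz i hi)
    have h := hequiv a 0 z hz
    rw [periodic_const K U σ hσinj hreal hconj hUpos hspan hf hper hmem hz] at h
    have h1 : (1 : ℂ) = ρ a := mul_right_cancel₀ hfz ((one_mul (f z)).trans h)
    exact h1.symm
  · rintro rfl
    exact ⟨fun _ => 1, differentiableOn_const _, ⟨fun _ => Complex.I, fun i _ => by simp,
      one_ne_zero⟩, by simp⟩

end
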